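/- arXiv:1911.07008 — 4 statements merged into one kernel-verified Lean document; each statement's English description precedes it below -/
import Mathlib

section
/- Let n ≥ 1 and let f₂ and f₃ be complex homogeneous polynomials of degrees 2 and 3 in the variables x₁,…,x_{n+1}, with f₂ a nondegenerate quadratic form, and set F = x₀·f₂ + f₃. Then the cubic hypersurface X₀ = {F = 0} ⊂ P^{n+1} has no singular points other than p = [1:0:⋯:0] if and only if the intersection Q ∩ C is transversal, i.e., at every common zero v ∈ ℂ^{n+1}, v ≠ 0, of f₂ and f₃, the gradients ∇f₂(v) and ∇f₃(v) are linearly independent over ℂ. -/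
open MvPolynomial

/-- The cubic form `F = x₀ · f₂(x₁,…,x_{n+1}) + f₃(x₁,…,x_{n+1})` in the variables
`x₀, …, x_{n+1}`, where `f₂` and `f₃` are polynomials in the variables `x₁, …, x_{n+1}`
(renamed into the last `n+1` of the `n+2` variables via `Fin.succ`). -/
noncomputable def nodalCubicForm {K : Type} [CommRing K] {n : ℕ}
    (f₂ f₃ : MvPolynomial (Fin (n + 1)) K) : MvPolynomial (Fin (n + 2)) K :=
  X 0 * rename Fin.succ f₂ + rename Fin.succ f₃

/-!
Write a point of affine space as `(t, v)`. It is a singular zero of `F = x₀ f + g` exactly when `v`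
is a common zero of `f` and `g` and `t ∇f(v) + ∇g(v) = 0`; it lies on the line of the node exactly
when `v = 0`. Where `∇f(v) ≠ 0`, a linear dependence between the two gradients can be normalised to
the form `t ∇f(v) + ∇g(v) = 0`, so it is the same thing as a singular zero of `F` above `v`.
-/

section Polynomials

variable {σ R : Type*} [CommSemiring R]

/-- The gradient of the polynomial `f` at the point `v`, as the vector of the values of its formal
partial derivatives. -/
noncomputable def gradAt (f : MvPolynomial σ R) (v : σ → R) : σ → R :=
  fun i => eval v (pderiv i f)

/-- The point `z` of affine space is a singular point of the hypersurface `f = 0`. The equation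
`f z = 0` is part of the definition because Euler's identity recovers it from the vanishing of the
gradient only for homogeneous `f` of invertible degree. -/
def IsSingularZero (f : MvPolynomial σ R) (z : σ → R) : Prop :=
  eval z f = 0 ∧ ∀ i, gradAt f z i = 0

theorem pderiv_rename_of_notMem_range {τ : Type*} {e : σ → τ} {j : τ} (hj : j ∉ Set.range e)
    (f : MvPolynomial σ R) : pderiv j (rename e f) = 0 := by
  classical
  refine pderiv_eq_zero_of_notMem_vars fun hmem => hj ?_
  obtain ⟨i, -, hi⟩ := Finset.mem_image.mp (vars_rename e f hmem)
  exact ⟨i, hi⟩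

theorem eval_cons_rename_succ {n : ℕ} (t : R) (v : Fin n → R) (f : MvPolynomial (Fin n) R) :
    eval (Fin.cons t v : Fin (n + 1) → R) (rename Fin.succ f) = eval v f := by
  rw [eval_rename, Fin.cons_comp_succ]

end Polynomials

theorem exists_cons_eq_smul_single_zero_iff {R : Type*} [Semiring R] {n : ℕ} (t : R)
    (v : Fin n → R) :
    (∃ c : R, (Fin.cons t v : Fin (n + 1) → R) = c • Pi.single 0 1) ↔ v = 0 := by
  simp [funext_iff, Fin.forall_fin_succ]

theorem linearIndependent_pair_iff_forall_smul_add_ne_zero {K V : Type*} [DivisionRing K]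
    [AddCommGroup V] [Module K V] {x y : V} (hx : x ≠ 0) :
    LinearIndependent K ![x, y] ↔ ∀ t : K, t • x + y ≠ 0 := by
  rw [LinearIndependent.pair_iff' hx, ← (Equiv.neg K).forall_congr_right]
  simp only [Equiv.neg_apply, neg_smul, ne_eq, neg_eq_iff_add_eq_zero]

section NodalCubicForm

variable {K : Type} [CommRing K] {n : ℕ} (f g : MvPolynomial (Fin (n + 1)) K)

theorem eval_cons_nodalCubicForm (t : K) (v : Fin (n + 1) → K) :
    eval (Fin.cons t v : Fin (n + 2) → K) (nodalCubicForm f g) = t * eval v f + eval v g := by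
  simp only [nodalCubicForm, map_add, map_mul, eval_X, Fin.cons_zero, eval_cons_rename_succ]

theorem pderiv_zero_nodalCubicForm : pderiv 0 (nodalCubicForm f g) = rename Fin.succ f := by
  have pderiv_zero_rename (h : MvPolynomial (Fin (n + 1)) K) :
      pderiv 0 (rename Fin.succ h) = 0 :=
    pderiv_rename_of_notMem_range (by simp) h
  simp [nodalCubicForm, pderiv_zero_rename]

theorem pderiv_succ_nodalCubicForm (i : Fin (n + 1)) :
    pderiv i.succ (nodalCubicForm f g) = nodalCubicForm (pderiv i f) (pderiv i g) := by
  simp [nodalCubicForm, pderiv_rename (Fin.succ_injective (n + 1)),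
    pderiv_X_of_ne (Fin.succ_ne_zero i).symm]

theorem isSingularZero_cons_nodalCubicForm_iff (t : K) (v : Fin (n + 1) → K) :
    IsSingularZero (nodalCubicForm f g) (Fin.cons t v : Fin (n + 2) → K) ↔
      eval v f = 0 ∧ eval v g = 0 ∧ t • gradAt f v + gradAt g v = 0 := by
  have grad_iff : t • gradAt f v + gradAt g v = 0 ↔
      ∀ i, t * eval v (pderiv i f) + eval v (pderiv i g) = 0 := funext_iff
  rw [IsSingularZero, Fin.forall_fin_succ, grad_iff]
  simp only [gradAt, pderiv_zero_nodalCubicForm, pderiv_succ_nodalCubicForm,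
    eval_cons_rename_succ, eval_cons_nodalCubicForm]
  constructor
  · rintro ⟨hF, hf, hgrad⟩
    exact ⟨hf, by simpa [hf] using hF, hgrad⟩
  · rintro ⟨hf, hg, hgrad⟩
    exact ⟨by simp [hf, hg], hf, hgrad⟩

end NodalCubicForm

theorem linearIndependent_gradAt_iff_forall_not_isSingularZero_cons {K : Type} [Field K] {n : ℕ}
    {f g : MvPolynomial (Fin (n + 1)) K} {v : Fin (n + 1) → K} (hf : eval v f = 0)
    (hg : eval v g = 0) (hgrad : gradAt f v ≠ 0) :
    LinearIndependent K ![gradAt f v, gradAt g v] ↔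
      ∀ t : K, ¬IsSingularZero (nodalCubicForm f g) (Fin.cons t v : Fin (n + 2) → K) := by
  simp only [linearIndependent_pair_iff_forall_smul_add_ne_zero hgrad,
    isSingularZero_cons_nodalCubicForm_iff, hf, hg, true_and, ne_eq]

theorem nodal_cubic_smooth_iff_transversal_general {K : Type} [Field K] {n : ℕ}
    (f g : MvPolynomial (Fin (n + 1)) K)
    (hsmooth : ∀ v : Fin (n + 1) → K, v ≠ 0 → eval v f = 0 → eval v g = 0 → gradAt f v ≠ 0) :
    (∀ z : Fin (n + 2) → K, z ≠ 0 → IsSingularZero (nodalCubicForm f g) z →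
        ∃ c : K, z = c • (Pi.single 0 1 : Fin (n + 2) → K)) ↔
      (∀ v : Fin (n + 1) → K, v ≠ 0 → eval v f = 0 → eval v g = 0 →
        LinearIndependent K ![gradAt f v, gradAt g v]) := by
  constructor
  · intro hnode v hv hf hg
    rw [linearIndependent_gradAt_iff_forall_not_isSingularZero_cons hf hg (hsmooth v hv hf hg)]
    intro t hsing
    have hz : (Fin.cons t v : Fin (n + 2) → K) ≠ 0 := fun h =>
      hv ((exists_cons_eq_smul_single_zero_iff t v).mp ⟨0, by rw [h, zero_smul]⟩)
    exact hv ((exists_cons_eq_smul_single_zero_iff t v).mp (hnode _ hz hsing))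
  · intro htrans z _ hsing
    obtain ⟨t, v, rfl⟩ : ∃ t v, z = Fin.cons t v := ⟨z 0, Fin.tail z, (Fin.cons_self_tail z).symm⟩
    rw [exists_cons_eq_smul_single_zero_iff]
    by_contra hv
    obtain ⟨hf, hg, -⟩ := (isSingularZero_cons_nodalCubicForm_iff f g t v).mp hsing
    exact (linearIndependent_gradAt_iff_forall_not_isSingularZero_cons hf hg
      (hsmooth v hv hf hg)).mp (htrans v hv hf hg) t hsing

/-- Lemma 1 (Finashin–Kharlamov): for a cubic `X₀ = {x₀·f₂ + f₃ = 0} ⊂ P^{n+1}` with a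
node at `p = [1:0:⋯:0]` (`f₂` a nondegenerate complex quadratic form, expressed by the
nonvanishing of its gradient at nonzero points), `X₀` has no singular points other than
`p` if and only if the intersection `Q ∩ C = {f₂ = f₃ = 0}` is transversal, i.e. at each
nonzero common zero `v` the gradients `∇f₂(v)` and `∇f₃(v)` are linearly independent. -/
theorem nodal_cubic_smooth_iff_transversal (n : ℕ) (hn : 1 ≤ n)
    (f₂ f₃ : MvPolynomial (Fin (n + 1)) ℂ)
    (hf₂ : f₂.IsHomogeneous 2) (hf₃ : f₃.IsHomogeneous 3)
    (hnd : ∀ v : Fin (n + 1) → ℂ, v ≠ 0 → ∃ i, eval v (pderiv i f₂) ≠ 0) :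
    (∀ z : Fin (n + 2) → ℂ, z ≠ 0 → eval z (nodalCubicForm f₂ f₃) = 0 →
        (∀ i, eval z (pderiv i (nodalCubicForm f₂ f₃)) = 0) →
        ∃ c : ℂ, z = c • (Pi.single 0 1 : Fin (n + 2) → ℂ)) ↔
      (∀ v : Fin (n + 1) → ℂ, v ≠ 0 → eval v f₂ = 0 → eval v f₃ = 0 →
        LinearIndependent ℂ
          ![fun i => eval v (pderiv i f₂), fun i => eval v (pderiv i f₃)]) := by
  exact Iff.trans (by simp only [IsSingularZero, gradAt, and_imp])
    (nodal_cubic_smooth_iff_transversal_general f₂ f₃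
      fun v hv _ _ => Function.ne_iff.mpr (hnd v hv))
end

section
/- Let n ≥ 1, let f₂ be a (positive or negative) definite real quadratic form in x₁,…,x_{n+1} and f₃ a real homogeneous cubic in x₁,…,x_{n+1}, and let X₀ = {x₀·f₂ + f₃ = 0} ⊂ P^{n+1} with p = [1:0:⋯:0]. Then the central projection [x₀ : x] ↦ [x] is a well-defined homeomorphism from X₀(ℝ) ∖ {p} onto ℝPⁿ. -/
/-!
On each line through `p = [1 : 0 : ⋯ : 0]` the cubic form `x₀ f₂ + f₃` is affine linear in `x₀` with
leading coefficient `f₂(x) ≠ 0`, so the line meets the cubic in exactly one point besides `p`. Hence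
the cubic minus `p` is the graph `x₀ = φ(x)` of `φ = -f₃ / f₂`. As `φ` is homogeneous of degree one,
`[x] ↦ [φ(x) : x]` is a well-defined continuous map of projective spaces, and it is an embedding
because the projection from `p` is a continuous left inverse to it.
-/

open MvPolynomial

/-- The vector `(1, 0, …, 0)` representing the node `p = [1:0:⋯:0]` is nonzero. -/
lemma single_zero_one_ne_zero {n : ℕ} : (Pi.single 0 1 : Fin (n + 1) → ℝ) ≠ 0 := by
  intro h
  have h0 := congrFun h (0 : Fin (n + 1))
  rw [Pi.single_eq_same, Pi.zero_apply] at h0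
  exact one_ne_zero h0

/-- The quotient topology on the projectivization of a topological vector space. -/
instance projTop (K V : Type) [DivisionRing K] [AddCommGroup V] [Module K V]
    [TopologicalSpace V] : TopologicalSpace (Projectivization K V) :=
  inferInstanceAs (TopologicalSpace (Quotient (projectivizationSetoid K V)))

open Projectivization Topology
open scoped LinearAlgebra.Projectivization

lemma eval_smul_of_isHomogeneous {σ R : Type*} [CommSemiring R] {d : ℕ} {φ : MvPolynomial σ R}
    (hφ : φ.IsHomogeneous d) (t : R) (v : σ → R) : eval (t • v) φ = t ^ d * eval v φ := by
  rw [eval_eq, eval_eq, Finset.mul_sum]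
  refine Finset.sum_congr rfl fun u hu => ?_
  have hdeg : ∑ i ∈ u.support, u i = d := by
    simpa [Finsupp.weight_apply, Finsupp.sum] using hφ (mem_support_iff.1 hu)
  simp only [Pi.smul_apply, smul_eq_mul, mul_pow, Finset.prod_mul_distrib,
    Finset.prod_pow_eq_pow_sum, hdeg]
  ring

lemma eval_rep_mk_eq_zero_iff {σ K : Type*} [Field K] {d : ℕ} {F : MvPolynomial σ K}
    (hF : F.IsHomogeneous d) {v : σ → K} (hv : v ≠ 0) :
    eval (mk K v hv).rep F = 0 ↔ eval v F = 0 := by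
  obtain ⟨a, ha⟩ := exists_smul_eq_mk_rep K v hv
  rw [← ha, Units.smul_def, eval_smul_of_isHomogeneous hF,
    mul_eq_zero_iff_left (pow_ne_zero d a.ne_zero)]

lemma isHomogeneous_nodalCubicForm {K : Type} [CommRing K] {n d : ℕ}
    {f g : MvPolynomial (Fin (n + 1)) K} (hf : f.IsHomogeneous d) (hg : g.IsHomogeneous (d + 1)) :
    (nodalCubicForm f g).IsHomogeneous (d + 1) :=
  (add_comm 1 d ▸ (isHomogeneous_X K 0).mul hf.rename_isHomogeneous).add hg.rename_isHomogeneous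

lemma eval_nodalCubicForm {K : Type} [CommRing K] {n : ℕ} (f g : MvPolynomial (Fin (n + 1)) K)
    (v : Fin (n + 2) → K) :
    eval v (nodalCubicForm f g) = v 0 * eval (Fin.tail v) f + eval (Fin.tail v) g := by
  simp only [nodalCubicForm, map_add, map_mul, eval_X, eval_rename]
  rfl

lemma isQuotientMap_projectivization_mk' (K V : Type) [DivisionRing K] [AddCommGroup V] [Module K V]
    [TopologicalSpace V] : IsQuotientMap (mk' K : {v : V // v ≠ 0} → ℙ K V) :=
  isQuotientMap_quot_mk

lemma cons_ne_zero_of_ne_zero {K : Type*} [Zero K] {m : ℕ} (x₀ : K) {x : Fin m → K} (hx : x ≠ 0) :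
    (Fin.cons x₀ x : Fin (m + 1) → K) ≠ 0 :=
  fun h => hx (congrArg Fin.tail h)

section CentralProjection

variable {K : Type} [DivisionRing K] {m : ℕ}

variable (K m) in
/-- The point `[1 : 0 : ⋯ : 0]`, the centre of the projection `[x₀ : x] ↦ [x]`. -/
def projCenter : ℙ K (Fin (m + 1) → K) :=
  mk K (Pi.single 0 1) (Pi.single_ne_zero_iff.2 one_ne_zero)

lemma mk_eq_projCenter_iff {v : Fin (m + 1) → K} (hv : v ≠ 0) :
    mk K v hv = projCenter K m ↔ Fin.tail v = 0 := by
  rw [projCenter, mk_eq_mk_iff']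
  constructor
  · rintro ⟨a, rfl⟩
    funext i
    simp [Fin.tail]
  · intro htail
    refine ⟨v 0, ?_⟩
    rw [← Fin.cons_self_tail v, htail]
    funext i
    cases i using Fin.cases <;> simp

lemma tail_rep_ne_zero {q : ℙ K (Fin (m + 1) → K)} (hq : q ≠ projCenter K m) :
    Fin.tail q.rep ≠ 0 := by
  rwa [← q.mk_rep, Ne, mk_eq_projCenter_iff] at hq

/-- The projection `[x₀ : x] ↦ [x]` from the point `[1 : 0 : ⋯ : 0]`, defined on its complement. -/
noncomputable def centralProj (q : ↥({projCenter K m}ᶜ : Set (ℙ K (Fin (m + 1) → K)))) :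
    ℙ K (Fin m → K) :=
  mk K (Fin.tail q.1.rep) (tail_rep_ne_zero q.2)

lemma centralProj_mk {v : Fin (m + 1) → K} (hv : v ≠ 0) (htail : Fin.tail v ≠ 0) :
    centralProj ⟨mk K v hv, (mk_eq_projCenter_iff hv).not.2 htail⟩ = mk K (Fin.tail v) htail := by
  obtain ⟨a, ha⟩ := exists_smul_eq_mk_rep K v hv
  exact (mk_eq_mk_iff K _ _ _ _).2 ⟨a, congrArg Fin.tail ha⟩

variable [TopologicalSpace K]

lemma isOpen_compl_projCenter [T1Space K] :
    IsOpen ({projCenter K m}ᶜ : Set (ℙ K (Fin (m + 1) → K))) := by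
  rw [← (isQuotientMap_projectivization_mk' K _).isOpen_preimage]
  have hpreimage : mk' K ⁻¹' {projCenter K m}ᶜ = {v | Fin.tail v.1 ≠ 0} :=
    Set.ext fun v => not_congr (mk_eq_projCenter_iff v.2)
  rw [hpreimage]
  exact isOpen_compl_singleton.preimage continuous_subtype_val.finTail

lemma continuous_centralProj [T1Space K] : Continuous (centralProj (K := K) (m := m)) := by
  rw [((isQuotientMap_projectivization_mk' K _).restrictPreimage_isOpen
    isOpen_compl_projCenter).continuous_iff]
  have htail (v : ↥(mk' K ⁻¹' {projCenter K m}ᶜ)) : Fin.tail v.1.1 ≠ 0 :=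
    (mk_eq_projCenter_iff v.1.2).not.1 v.2
  exact ((isQuotientMap_projectivization_mk' K _).continuous.comp
    ((continuous_subtype_val.comp continuous_subtype_val).finTail.subtype_mk htail)).congr
    fun v => (centralProj_mk v.1.2 (htail v)).symm

end CentralProjection

section GraphSection

variable {K : Type} [DivisionRing K] {m : ℕ}

/-- The map `[x] ↦ [φ(x) : x]` parametrizing the graph of a function `φ` homogeneous of degree one.
Homogeneity is encoded as equivariance under `Kˣ`. -/
def graphSection (φ : (Fin m → K) →[Kˣ] K) : ℙ K (Fin m → K) → ℙ K (Fin (m + 1) → K) :=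
  Quotient.map' (fun x => ⟨Fin.cons (φ x.1) x.1, cons_ne_zero_of_ne_zero _ x.2⟩) <| by
    rintro ⟨_, _⟩ ⟨x, _⟩ ⟨a, rfl⟩
    refine ⟨a, ?_⟩
    simp only [map_smul]
    funext i
    cases i using Fin.cases <;> rfl

lemma graphSection_mk (φ : (Fin m → K) →[Kˣ] K) {x : Fin m → K} (hx : x ≠ 0) :
    graphSection φ (mk K x hx) = mk K (Fin.cons (φ x) x) (cons_ne_zero_of_ne_zero _ hx) :=
  rfl

lemma graphSection_ne_projCenter (φ : (Fin m → K) →[Kˣ] K) (y : ℙ K (Fin m → K)) :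
    graphSection φ y ≠ projCenter K m := by
  induction y with | h x hx =>
  rwa [graphSection_mk, Ne, mk_eq_projCenter_iff, Fin.tail_cons]

lemma centralProj_graphSection (φ : (Fin m → K) →[Kˣ] K) (y : ℙ K (Fin m → K)) :
    centralProj ⟨graphSection φ y, graphSection_ne_projCenter φ y⟩ = y := by
  induction y with | h x hx =>
  exact centralProj_mk (cons_ne_zero_of_ne_zero (φ x) hx) hx

lemma mk_mem_range_graphSection_iff (φ : (Fin m → K) →[Kˣ] K) {v : Fin (m + 1) → K} (hv : v ≠ 0) :
    mk K v hv ∈ Set.range (graphSection φ) ↔ Fin.tail v ≠ 0 ∧ φ (Fin.tail v) = v 0 := by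
  constructor
  · rintro ⟨y, hy⟩
    induction y with | h x hx =>
    obtain ⟨a, rfl⟩ := (mk_eq_mk_iff K _ _ _ _).1 hy.symm
    exact ⟨(smul_ne_zero_iff_ne a).2 hx, map_smul φ a x⟩
  · rintro ⟨htail, hφ⟩
    refine ⟨mk K (Fin.tail v) htail, ?_⟩
    simp only [graphSection_mk, hφ, Fin.cons_self_tail]

variable [TopologicalSpace K]

lemma continuous_graphSection {φ : (Fin m → K) →[Kˣ] K} (hφ : ContinuousOn φ {0}ᶜ) :
    Continuous (graphSection φ) := by
  rw [(isQuotientMap_projectivization_mk' K _).continuous_iff]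
  have hφ' : Continuous fun x : {x : Fin m → K // x ≠ 0} => φ x.1 :=
    hφ.comp_continuous continuous_subtype_val Subtype.property
  have hcons : Continuous fun x : {x : Fin m → K // x ≠ 0} =>
      (Fin.cons (φ x.1) x.1 : Fin (m + 1) → K) :=
    hφ'.finCons continuous_subtype_val
  exact (isQuotientMap_projectivization_mk' K _).continuous.comp
    (hcons.subtype_mk fun x => cons_ne_zero_of_ne_zero _ x.2)

lemma isEmbedding_graphSection [T1Space K] {φ : (Fin m → K) →[Kˣ] K} (hφ : ContinuousOn φ {0}ᶜ) :
    IsEmbedding (graphSection φ) :=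
  IsEmbedding.subtypeVal.comp <|
    IsEmbedding.of_leftInverse (centralProj_graphSection φ) continuous_centralProj
      ((continuous_graphSection hφ).subtype_mk (graphSection_ne_projCenter φ))

end GraphSection

section NegQuotient

variable {σ K : Type*} [Field K] {d : ℕ} {f g : MvPolynomial σ K}

/-- The degree-one homogeneous function `-g / f`, whose graph is the locus `x₀ f + g = 0` away from
the zeros of `f`; at those zeros its value is `0` by the convention for division. -/
noncomputable def negQuotient (hf : f.IsHomogeneous d) (hg : g.IsHomogeneous (d + 1)) :
    (σ → K) →[Kˣ] K where
  toFun v := -eval v g / eval v f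
  map_smul' a v := by
    simp only [Units.smul_def, eval_smul_of_isHomogeneous hf, eval_smul_of_isHomogeneous hg,
      pow_succ, mul_assoc, ← mul_neg, smul_eq_mul, id]
    rw [mul_div_mul_left _ _ (pow_ne_zero d a.ne_zero), mul_div_assoc]

lemma negQuotient_apply (hf : f.IsHomogeneous d) (hg : g.IsHomogeneous (d + 1)) (v : σ → K) :
    negQuotient hf hg v = -eval v g / eval v f :=
  rfl

lemma continuousOn_negQuotient [TopologicalSpace K] [IsTopologicalDivisionRing K]
    (hf : f.IsHomogeneous d) (hg : g.IsHomogeneous (d + 1)) {s : Set (σ → K)}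
    (hs : ∀ v ∈ s, eval v f ≠ 0) : ContinuousOn (negQuotient hf hg) s :=
  g.continuous_eval.neg.continuousOn.div f.continuous_eval.continuousOn hs

end NegQuotient

lemma zeroLocus_nodalCubicForm_diff_projCenter {K : Type} [Field K] {n d : ℕ}
    {f g : MvPolynomial (Fin (n + 1)) K} (hf : f.IsHomogeneous d) (hg : g.IsHomogeneous (d + 1))
    (hdef : ∀ v, v ≠ 0 → eval v f ≠ 0) :
    {q : ℙ K (Fin (n + 2) → K) | eval q.rep (nodalCubicForm f g) = 0} \ {projCenter K (n + 1)} =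
      Set.range (graphSection (negQuotient hf hg)) := by
  ext q
  induction q with | h v hv =>
  rw [Set.mem_sdiff, Set.mem_ofPred_eq, Set.mem_singleton_iff, mk_eq_projCenter_iff,
    eval_rep_mk_eq_zero_iff (isHomogeneous_nodalCubicForm hf hg), eval_nodalCubicForm,
    mk_mem_range_graphSection_iff, and_comm]
  refine and_congr_right fun htail => ?_
  rw [negQuotient_apply, div_eq_iff (hdef _ htail), neg_eq_iff_add_eq_zero, add_comm]

theorem nodal_cubic_complement_homeo_proj_space_general {K : Type} [Field K] [TopologicalSpace K]
    [IsTopologicalDivisionRing K] [T1Space K] {n d : ℕ} {f g : MvPolynomial (Fin (n + 1)) K}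
    (hf : f.IsHomogeneous d) (hg : g.IsHomogeneous (d + 1))
    (hdef : ∀ v : Fin (n + 1) → K, v ≠ 0 → eval v f ≠ 0) :
    ∃ h : ↥({q : ℙ K (Fin (n + 2) → K) | eval q.rep (nodalCubicForm f g) = 0} \
        {projCenter K (n + 1)}) ≃ₜ ℙ K (Fin (n + 1) → K),
      ∀ (x₀ : K) (x : Fin (n + 1) → K) (hx : x ≠ 0) (hc : (Fin.cons x₀ x : Fin (n + 2) → K) ≠ 0)
        (hm : mk K (Fin.cons x₀ x : Fin (n + 2) → K) hc ∈
          {q : ℙ K (Fin (n + 2) → K) | eval q.rep (nodalCubicForm f g) = 0} \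
            {projCenter K (n + 1)}),
        h ⟨mk K (Fin.cons x₀ x : Fin (n + 2) → K) hc, hm⟩ = mk K x hx := by
  have hgraph := zeroLocus_nodalCubicForm_diff_projCenter hf hg hdef
  have hemb := isEmbedding_graphSection (continuousOn_negQuotient hf hg hdef)
  refine ⟨(Homeomorph.setCongr hgraph).trans hemb.toHomeomorph.symm, fun x₀ x hx hc hm => ?_⟩
  have hx₀ : negQuotient hf hg x = x₀ := ((mk_mem_range_graphSection_iff _ hc).1 (hgraph ▸ hm)).2
  refine hemb.toHomeomorph.symm_apply_eq.2 (Subtype.ext ?_)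
  change mk K (Fin.cons x₀ x) hc = graphSection (negQuotient hf hg) (mk K x hx)
  simp only [graphSection_mk, hx₀]

/-- If `f₂` is a definite real quadratic form (no nonzero real zeros) and `f₃` a real
cubic form in `x₁,…,x_{n+1}`, then for the cubic `X₀ = {x₀·f₂ + f₃ = 0} ⊂ P^{n+1}` with
`p = [1:0:⋯:0]`, the central projection `[x₀ : x] ↦ [x]` is a well-defined homeomorphism
from `X₀(ℝ) ∖ {p}` onto `ℝPⁿ`. -/
theorem nodal_cubic_complement_homeo_proj_space (n : ℕ) (hn : 1 ≤ n)
    (f₂ f₃ : MvPolynomial (Fin (n + 1)) ℝ)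
    (hf₂ : f₂.IsHomogeneous 2) (hf₃ : f₃.IsHomogeneous 3)
    (hdef : ∀ v : Fin (n + 1) → ℝ, v ≠ 0 → eval v f₂ ≠ 0) :
    ∃ h : ↥({x : Projectivization ℝ (Fin (n + 2) → ℝ) |
            eval x.rep (nodalCubicForm f₂ f₃) = 0} \
          {Projectivization.mk ℝ ((Pi.single 0 1 : Fin (n + 2) → ℝ)) single_zero_one_ne_zero}) ≃ₜ
        Projectivization ℝ (Fin (n + 1) → ℝ),
      ∀ (x₀ : ℝ) (x : Fin (n + 1) → ℝ) (hx : x ≠ 0) (hc : (Fin.cons x₀ x : Fin (n + 2) → ℝ) ≠ 0)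
        (hm : Projectivization.mk ℝ (Fin.cons x₀ x : Fin (n + 2) → ℝ) hc ∈
          ({x : Projectivization ℝ (Fin (n + 2) → ℝ) |
              eval x.rep (nodalCubicForm f₂ f₃) = 0} \
            {Projectivization.mk ℝ ((Pi.single 0 1 : Fin (n + 2) → ℝ)) single_zero_one_ne_zero})),
        h ⟨Projectivization.mk ℝ (Fin.cons x₀ x : Fin (n + 2) → ℝ) hc, hm⟩ = Projectivization.mk ℝ x hx :=
  nodal_cubic_complement_homeo_proj_space_general hf₂ hf₃ hdef
end

section
/- Let m ≥ 0 and define real homogeneous polynomials in x₀,…,x_{4+m}: f₂(x) = Σ_{i=1}^{4+m} x_i² − x₀² and f₄(x) = (Σ_{i=1}^{4+m} x_i² − 2x₀²)·(Σ_{i=1}^{4+m} x_i² + x₀²). Then the only real common zero of f₂ and f₄ is x = 0. Consequently, for every ε ≠ 0, the real quartic hypersurface X₀ = {y²·f₂(x) + ε·f₄(x) = 0} ⊂ P^{5+m} (with homogeneous coordinates x₀,…,x_{4+m}, y) contains no real line passing through its node p = [0:⋯:0:1]: there is no 2-dimensional real subspace W ⊆ ℝ^{6+m} containing the vector (0,…,0,1)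 on which the quartic form y²·f₂(x) + ε·f₄(x) vanishes identically. -/
/-- The quadratic form `f₂(x) = Σ_{i=1}^{4+m} xᵢ² − x₀²` on `ℝ^{5+m}`
(coordinates `x₀, …, x_{4+m}`). -/
def quarticF2 (m : ℕ) (x : Fin (m + 5) → ℝ) : ℝ :=
  (∑ i : Fin (m + 4), x i.succ ^ 2) - x 0 ^ 2

/-- The quartic form `f₄(x) = (Σ xᵢ² − 2x₀²)·(Σ xᵢ² + x₀²)` on `ℝ^{5+m}`. -/
def quarticF4 (m : ℕ) (x : Fin (m + 5) → ℝ) : ℝ :=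
  ((∑ i : Fin (m + 4), x i.succ ^ 2) - 2 * x 0 ^ 2) *
    ((∑ i : Fin (m + 4), x i.succ ^ 2) + x 0 ^ 2)

/-!
Write `|x|² = x₀² + Σ_{i≥1} xᵢ²`. Then `f₂ = |x|² - 2x₀²` and `f₄ = (f₂ - x₀²)·|x|²`, so at a common
zero `0 = -x₀²·2x₀²`, which forces `x₀ = 0` and then `|x|² = 0`.

A line through the node is swept out by vectors `(x, t)` with `t` free once `x` is fixed.
Restricting `y²f₂ + εf₄` to `t = 0` and `t = 1` shows that `f₄` and `f₂` both vanish at `x`, so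
`x = 0` and the subspace is only the span of the node.
-/

section CommonZeros

open scoped Matrix

variable {m : ℕ} (x : Fin (m + 5) → ℝ)

theorem quarticF2_eq_dotProduct_sub : quarticF2 m x = x ⬝ᵥ x - 2 * x 0 ^ 2 := by
  simp only [quarticF2, dotProduct, Fin.sum_univ_succ (n := m + 4), ← sq]
  ring

theorem quarticF4_eq_mul_dotProduct :
    quarticF4 m x = (quarticF2 m x - x 0 ^ 2) * (x ⬝ᵥ x) := by
  rw [quarticF2_eq_dotProduct_sub]
  simp only [quarticF4, dotProduct, Fin.sum_univ_succ (n := m + 4), ← sq]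
  ring

variable {x}

theorem eq_zero_of_quarticF2_eq_zero_of_quarticF4_eq_zero
    (hF2 : quarticF2 m x = 0) (hF4 : quarticF4 m x = 0) : x = 0 := by
  have norm_sq : x ⬝ᵥ x = 2 * x 0 ^ 2 := by
    rwa [quarticF2_eq_dotProduct_sub, sub_eq_zero] at hF2
  have head_eq_zero : x 0 = 0 := by
    simpa [quarticF4_eq_mul_dotProduct, hF2, norm_sq] using hF4
  exact dotProduct_self_eq_zero.mp (by simp [norm_sq, head_eq_zero])

end CommonZeros

section LinesThroughNode

variable {R M : Type*} [Ring R] [AddCommGroup M] [Module R M] {W : Submodule R (M × R)}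

theorem mk_fst_mem_of_zero_one_mem (node_mem : ((0, 1) : M × R) ∈ W) {w : M × R} (hw : w ∈ W)
    (t : R) : (w.1, t) ∈ W := by
  have translate : w + (t - w.2) • ((0, 1) : M × R) = (w.1, t) := by
    ext <;> simp
  exact translate ▸ W.add_mem hw (W.smul_mem (t - w.2) node_mem)

theorem eq_span_zero_one_of_forall_fst_eq_zero (node_mem : ((0, 1) : M × R) ∈ W)
    (fst_eq_zero : ∀ w ∈ W, w.1 = 0) : W = Submodule.span R {(0, 1)} := by
  refine le_antisymm (fun w hw ↦ ?_) ((Submodule.span_singleton_le_iff_mem _ _).mpr node_mem)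
  exact Submodule.mem_span_singleton.mpr ⟨w.2, Prod.ext (by simp [fst_eq_zero w hw]) (by simp)⟩

theorem eq_span_zero_one_of_forall_pow_mul_add_eq_zero [NoZeroDivisors R] {f g : M → R}
    (common_zero : ∀ x, f x = 0 → g x = 0 → x = 0) {n : ℕ} (hn : n ≠ 0) {ε : R} (hε : ε ≠ 0)
    (node_mem : ((0, 1) : M × R) ∈ W)
    (vanishes : ∀ w ∈ W, w.2 ^ n * f w.1 + ε * g w.1 = 0) :
    W = Submodule.span R {(0, 1)} := by
  refine eq_span_zero_one_of_forall_fst_eq_zero node_mem fun w hw ↦ ?_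
  have hg : g w.1 = 0 := by
    simpa [hn, hε] using vanishes _ (mk_fst_mem_of_zero_one_mem node_mem hw 0)
  have hf : f w.1 = 0 := by
    simpa [hg] using vanishes _ (mk_fst_mem_of_zero_one_mem node_mem hw 1)
  exact common_zero w.1 hf hg

end LinesThroughNode

/-- (Finashin–Kharlamov, concluding remarks, quartic example.)  The only real common
zero of `f₂` and `f₄` is `x = 0`; consequently, for every `ε ≠ 0` the real quartic
hypersurface `{y²·f₂(x) + ε·f₄(x) = 0} ⊂ P^{5+m}` contains no real line through its
node `p = [0:⋯:0:1]`: no 2-dimensional subspace `W ⊆ ℝ^{6+m}` containing `(0,…,0,1)`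
has the quartic form vanishing identically on it.  Points of `ℝ^{6+m}` are written
`(x, y)` with `x ∈ ℝ^{5+m}` and `y ∈ ℝ`, and `p` corresponds to the vector `(0, 1)`. -/
theorem quartic_no_real_lines_through_node (m : ℕ) :
    (∀ x : Fin (m + 5) → ℝ, quarticF2 m x = 0 → quarticF4 m x = 0 → x = 0) ∧
    ∀ ε : ℝ, ε ≠ 0 →
      ¬ ∃ W : Submodule ℝ ((Fin (m + 5) → ℝ) × ℝ), Module.finrank ℝ W = 2 ∧
          ((0, 1) : (Fin (m + 5) → ℝ) × ℝ) ∈ W ∧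
          ∀ w ∈ W, w.2 ^ 2 * quarticF2 m w.1 + ε * quarticF4 m w.1 = 0 := by
  have common_zero (x : Fin (m + 5) → ℝ) (hF2 : quarticF2 m x = 0) (hF4 : quarticF4 m x = 0) :
      x = 0 :=
    eq_zero_of_quarticF2_eq_zero_of_quarticF4_eq_zero hF2 hF4
  refine ⟨common_zero, ?_⟩
  rintro ε hε ⟨W, finrank_eq_two, node_mem, vanishes⟩
  have W_eq_span : W = Submodule.span ℝ {(0, 1)} :=
    eq_span_zero_one_of_forall_pow_mul_add_eq_zero common_zero two_ne_zero hε node_mem vanishes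
  have finrank_eq_one : Module.finrank ℝ W = 1 := by
    rw [W_eq_span, finrank_span_singleton (by simp)]
  omega
end

section
/- Let m ≥ 0 and ε₁ ≠ 0 be real, and consider on ℝ^{4+m} × ℝ² the real forms q(y,u,v) = Σ_{i=0}^{3+m} y_i² − u² − v² (quadratic) and c(y,u,v) = y₀³ + ε₁(u³ + v³) (cubic). Then there is no 2-dimensional real linear subspace W ⊆ ℝ^{4+m} × ℝ² on which both q and c vanish identically; that is, the quadro-cubic {q = 0, c = 0} ⊂ P^{5+m} contains no real lines at all. -/
/-!
On a subspace `W` where `q` vanishes, `(u, v) = 0` forces `Σ yᵢ² = 0`, so the projection of `W`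
to the `(u, v)`-plane is injective; if `dim W = 2` it is bijective. Hence `y₀ = ℓ(u, v)` on `W` for
a linear form `ℓ`, and the vanishing of `c` gives `ℓ(u, v)³ = -ε₁ (u³ + v³)`. Therefore
`ℓ(1, -1) = 0`, so `ℓ(1, 1) = 2 ℓ(1, 0)`; cubing, `-2 ε₁ = -8 ε₁`, which forces `ε₁ = 0`.
-/

/-- The quadratic form `q(y,u,v) = Σ_{i=0}^{3+m} yᵢ² − u² − v²` on `ℝ^{4+m} × ℝ²`,
whose points are written `z = (y, (u, v))`. -/
def hyperbolicQ (m : ℕ) (z : (Fin (m + 4) → ℝ) × ℝ × ℝ) : ℝ :=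
  (∑ i : Fin (m + 4), z.1 i ^ 2) - z.2.1 ^ 2 - z.2.2 ^ 2

/-- The cubic form `c(y,u,v) = y₀³ + ε₁(u³ + v³)` on `ℝ^{4+m} × ℝ²`. -/
def quadroCubicC (m : ℕ) (ε₁ : ℝ) (z : (Fin (m + 4) → ℝ) × ℝ × ℝ) : ℝ :=
  z.1 0 ^ 3 + ε₁ * (z.2.1 ^ 3 + z.2.2 ^ 3)

open Module

theorem pi_sq_posDef {ι R : Type*} [Fintype ι] [CommRing R] [LinearOrder R]
    [IsStrictOrderedRing R] :
    (QuadraticMap.pi fun _ : ι ↦ (QuadraticMap.sq : QuadraticForm R R)).PosDef :=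
  QuadraticMap.posDef_pi_iff.2 fun _ ↦
    QuadraticMap.linMulLinSelfPosDef LinearMap.id LinearMap.ker_id

theorem eq_zero_of_forall_linearMap_cube_add_mul_cubes_eq_zero {R : Type*} [CommRing R]
    [NoZeroDivisors R] (h6 : (6 : R) ≠ 0) (ℓ : R × R →ₗ[R] R) {ε : R}
    (h : ∀ w : R × R, ℓ w ^ 3 + ε * (w.1 ^ 3 + w.2 ^ 3) = 0) : ε = 0 := by
  have at_one_zero : ℓ (1, 0) ^ 3 + ε = 0 := by simpa using h (1, 0)
  have at_one_neg_one : ℓ (1, -1) = 0 := by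
    simpa [Odd.neg_one_pow (by decide : Odd 3)] using h (1, -1)
  have ℓ_one_one : ℓ (1, 1) = 2 * ℓ (1, 0) := by
    have h_add : ℓ (1, 1) + ℓ (1, -1) = 2 * ℓ (1, 0) := by
      rw [← map_add, ← smul_eq_mul, ← map_smul]
      norm_num
    rwa [at_one_neg_one, add_zero] at h_add
  have at_one_one : (2 * ℓ (1, 0)) ^ 3 + ε * 2 = 0 := by
    simpa [ℓ_one_one, one_add_one_eq_two] using h (1, 1)
  have six_mul_ε : 6 * ε = 0 := by linear_combination 8 * at_one_zero - at_one_one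
  exact (mul_eq_zero.1 six_mul_ε).resolve_left h6

section VectorSpace

variable {K E F : Type*} [Field K] [AddCommGroup E] [Module K E] [AddCommGroup F] [Module K F]

theorem injective_snd_comp_subtype_of_anisotropic {Q : QuadraticForm K E} (hQ : Q.Anisotropic)
    (Q' : QuadraticForm K F) {W : Submodule K (E × F)} (hW : ∀ z ∈ W, Q z.1 = Q' z.2) :
    Function.Injective (LinearMap.snd K E F ∘ₗ W.subtype) := by
  rw [injective_iff_map_eq_zero]
  rintro ⟨⟨y, w⟩, hz⟩ (rfl : w = 0)
  have hy : y = 0 := hQ y (by simpa using hW _ hz)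
  simp [hy]

theorem exists_linearMap_forall_mem_of_injective_snd [FiniteDimensional K F]
    {W : Submodule K (E × F)} (hinj : Function.Injective (LinearMap.snd K E F ∘ₗ W.subtype))
    (hdim : finrank K W = finrank K F) : ∃ f : F →ₗ[K] E, ∀ w, (f w, w) ∈ W := by
  have : FiniteDimensional K W := .of_injective _ hinj
  let e : W ≃ₗ[K] F := LinearMap.linearEquivOfInjective _ hinj hdim
  refine ⟨LinearMap.fst K E F ∘ₗ W.subtype ∘ₗ e.symm, fun w ↦ ?_⟩
  have hgraph : ((e.symm w : E × F).1, w) = e.symm w := Prod.ext rfl (e.apply_symm_apply w).symm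
  exact hgraph ▸ (e.symm w).2

theorem quadroCubic_no_real_lines_general (h6 : (6 : K) ≠ 0) {Q : QuadraticForm K E}
    (hQ : Q.Anisotropic) (Q' : QuadraticForm K (K × K)) (φ : Dual K E) {ε : K} (hε : ε ≠ 0) :
    ¬ ∃ W : Submodule K (E × K × K), finrank K W = 2 ∧
        (∀ z ∈ W, Q z.1 = Q' z.2) ∧ (∀ z ∈ W, φ z.1 ^ 3 + ε * (z.2.1 ^ 3 + z.2.2 ^ 3) = 0) := by
  rintro ⟨W, hdim, hq, hc⟩
  have hinj := injective_snd_comp_subtype_of_anisotropic hQ Q' hq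
  obtain ⟨f, hf⟩ := exists_linearMap_forall_mem_of_injective_snd hinj (by simp [hdim])
  exact hε (eq_zero_of_forall_linearMap_cube_add_mul_cubes_eq_zero h6 (φ ∘ₗ f)
    fun w ↦ hc _ (hf w))

end VectorSpace

/-- (Finashin–Kharlamov, concluding remarks.)  For any real `ε₁ ≠ 0` the quadro-cubic
`{q = 0, c = 0} ⊂ P^{5+m}`, with `q(y,u,v) = Σ yᵢ² − u² − v²` and
`c(y,u,v) = y₀³ + ε₁(u³+v³)`, contains no real lines at all: there is no 2-dimensional
subspace `W ⊆ ℝ^{4+m} × ℝ²` on which both `q` and `c` vanish identically. -/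
theorem quadroCubic_no_real_lines (m : ℕ) (ε₁ : ℝ) (hε₁ : ε₁ ≠ 0) :
    ¬ ∃ W : Submodule ℝ ((Fin (m + 4) → ℝ) × ℝ × ℝ), Module.finrank ℝ W = 2 ∧
        (∀ z ∈ W, hyperbolicQ m z = 0) ∧ (∀ z ∈ W, quadroCubicC m ε₁ z = 0) := by
  simpa [hyperbolicQ, quadroCubicC, sub_sub, sub_eq_zero, sq] using
    quadroCubic_no_real_lines_general (by norm_num) (pi_sq_posDef (ι := Fin (m + 4))).anisotropic
      (QuadraticMap.sq.prod QuadraticMap.sq) (LinearMap.proj 0) hε₁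
end
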